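/- Let u ∈ F₂ and suppose that there exists an automorphism φ of F₂ such that some conjugate of φ(u) is positive. Then there exist a chain ψ of type (C1) or of type (C2) whose length is at most 2‖u‖+3 and a Whitehead automorphism β of type (W1) such that some conjugate of β(ψ(u)) is positive. -/

import Mathlib

noncomputable section

/-- The free group of rank two. -/
abbrev F : Type := FreeGroup (Fin 2)

/-- The generator `a`. -/
def ga : F := FreeGroup.of 0

/-- The generator `b`. -/
def gb : F := FreeGroup.of 1

/-- Build an automorphism of `F` from images of the generators together with
an explicit inverse. -/
def mkAut (x y xi yi : F)
    (h1 : FreeGroup.lift ![xi, yi] x = ga)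
    (h2 : FreeGroup.lift ![xi, yi] y = gb)
    (h3 : FreeGroup.lift ![x, y] xi = ga)
    (h4 : FreeGroup.lift ![x, y] yi = gb) : MulAut F :=
  MonoidHom.toMulEquiv (FreeGroup.lift ![x, y]) (FreeGroup.lift ![xi, yi])
    (by
      ext i
      fin_cases i
      · simpa [ga] using h1
      · simpa [gb] using h2)
    (by
      ext i
      fin_cases i
      · simpa [ga] using h3
      · simpa [gb] using h4)

/-- `σ : a ↦ ab, b ↦ b`. -/
def σ : MulAut F :=
  mkAut (ga * gb) gb (ga * gb⁻¹) gb
    (by simp [ga, gb]) (by simp [ga, gb]) (by simp [ga, gb]) (by simp [ga, gb])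

/-- `τ : a ↦ a, b ↦ ba`. -/
def τ : MulAut F :=
  mkAut ga (gb * ga) ga (gb * ga⁻¹)
    (by simp [ga, gb]) (by simp [ga, gb]) (by simp [ga, gb]) (by simp [ga, gb])

/-- `δ₁ : a ↦ b⁻¹ab, b ↦ b`. -/
def δ₁ : MulAut F :=
  mkAut (gb⁻¹ * ga * gb) gb (gb * ga * gb⁻¹) gb
    (by simp [ga, gb, mul_assoc]) (by simp [ga, gb]) (by simp [ga, gb, mul_assoc]) (by simp [ga, gb])

/-- `δ₂ : a ↦ bab⁻¹, b ↦ b`. -/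
def δ₂ : MulAut F :=
  mkAut (gb * ga * gb⁻¹) gb (gb⁻¹ * ga * gb) gb
    (by simp [ga, gb, mul_assoc]) (by simp [ga, gb]) (by simp [ga, gb, mul_assoc]) (by simp [ga, gb])

/-- `δ₃ : a ↦ a, b ↦ a⁻¹ba`. -/
def δ₃ : MulAut F :=
  mkAut ga (ga⁻¹ * gb * ga) ga (ga * gb * ga⁻¹)
    (by simp [ga, gb]) (by simp [ga, gb, mul_assoc]) (by simp [ga, gb]) (by simp [ga, gb, mul_assoc])

/-- `δ₄ : a ↦ a, b ↦ aba⁻¹`. -/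
def δ₄ : MulAut F :=
  mkAut ga (ga * gb * ga⁻¹) ga (ga⁻¹ * gb * ga)
    (by simp [ga, gb]) (by simp [ga, gb, mul_assoc]) (by simp [ga, gb]) (by simp [ga, gb, mul_assoc])

/-- `π : a ↦ b, b ↦ a⁻¹`. -/
def pi' : MulAut F :=
  mkAut gb ga⁻¹ gb⁻¹ ga
    (by simp [ga, gb]) (by simp [ga, gb]) (by simp [ga, gb]) (by simp [ga, gb])

/-- Word length of (the reduced word representing) an element of `F`. -/
def len (w : F) : ℕ := w.toWord.length

/-- Cyclic length: minimal word length among all conjugates. -/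
def cyclen (w : F) : ℕ := sInf {n | ∃ g : F, len (g * w * g⁻¹) = n}

/-- The chain `τ^{m_k}σ^{l_k}⋯τ^{m_1}σ^{l_1}` of type (C1) determined by the list
`[(l_k, m_k), …, (l_1, m_1)]` of pairs of exponents. -/
def chainC1 (c : List (ℕ × ℕ)) : MulAut F :=
  (c.map fun p => τ ^ p.2 * σ ^ p.1).prod

/-- The chain `τ^{-m_k}σ^{-l_k}⋯τ^{-m_1}σ^{-l_1}` of type (C2) determined by the list
`[(l_k, m_k), …, (l_1, m_1)]` of pairs of exponents. -/
def chainC2 (c : List (ℕ × ℕ)) : MulAut F :=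
  (c.map fun p => (τ ^ p.2)⁻¹ * (σ ^ p.1)⁻¹).prod

/-- Number of factors of `σ` in a chain. -/
def sigmaCount (c : List (ℕ × ℕ)) : ℕ := (c.map Prod.fst).sum

/-- Number of factors of `τ` in a chain. -/
def tauCount (c : List (ℕ × ℕ)) : ℕ := (c.map Prod.snd).sum

/-- The length `Σ (l_i + m_i)` of a chain. -/
def chainLen (c : List (ℕ × ℕ)) : ℕ := sigmaCount c + tauCount c

/-- A Whitehead automorphism of type (W1): it permutes `{a, a⁻¹, b, b⁻¹}`. -/
def IsW1 (β : MulAut F) : Prop :=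
  β ga ∈ ({ga, ga⁻¹, gb, gb⁻¹} : Set F) ∧ β gb ∈ ({ga, ga⁻¹, gb, gb⁻¹} : Set F)

/-- A chain of type (C1). -/
def IsC1 (φ : MulAut F) : Prop := ∃ c : List (ℕ × ℕ), c ≠ [] ∧ φ = chainC1 c

/-- A chain of type (C2). -/
def IsC2 (φ : MulAut F) : Prop := ∃ c : List (ℕ × ℕ), c ≠ [] ∧ φ = chainC2 c

/-- A positive element: a product of the generators `a` and `b`. -/
def IsPositive (w : F) : Prop := w ∈ Submonoid.closure ({ga, gb} : Set F)

/-- The four automorphisms `δ₁, δ₂, δ₃, δ₄`. -/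
def δIdx : Fin 4 → MulAut F := ![δ₁, δ₂, δ₃, δ₄]


/-! ## Part A : walks -/

/-- Admissible transitions between letters. -/
def TR (q r : Fin 2 × Bool) : Prop :=
  (q.1 = r.1 → q.2 = r.2) ∧ (q.1 ≠ r.1 → q.2 = false → r.2 = true)

/-- Walks on letters. -/
inductive WL : (Fin 2 × Bool) → (Fin 2 × Bool) → List (Fin 2 × Bool) → Prop
  | nil (p) : WL p p []
  | snoc {p q r L} : WL p q L → TR q r → WL p r (L ++ [r])

/-- Number of negative letters. -/
def negc (L : List (Fin 2 × Bool)) : ℕ := L.countP (fun p => !p.2)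

lemma negc_append (L M : List (Fin 2 × Bool)) : negc (L ++ M) = negc L + negc M := by
  simp [negc]

/-- `u` is conjugate to a closed admissible walk with `n` negative letters. -/
def TT (u : F) (n : ℕ) : Prop :=
  ∃ p L, WL p p L ∧ IsConj u (FreeGroup.mk L) ∧ n = negc L

/-- A generator or its inverse. -/
def sg (i : Fin 2) (e : Bool) : F := FreeGroup.mk [(i, e)]

lemma sg_true (i : Fin 2) : sg i true = FreeGroup.of i := rfl
lemma sg_false (i : Fin 2) : sg i false = (FreeGroup.of i)⁻¹ := rfl

lemma mk_append (L M : List (Fin 2 × Bool)) :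
    FreeGroup.mk (L ++ M) = FreeGroup.mk L * FreeGroup.mk M := by
  rw [FreeGroup.mul_mk]

/-- Allowed exponents. -/
def OKk : Bool → Bool → ℤ → Prop
  | true, true, _ => True
  | true, false, k => 1 ≤ k
  | false, true, k => 1 ≤ k
  | false, false, k => 0 ≤ k

/-- Walks in block form. -/
inductive WA (i j : Fin 2) : Bool → Bool → F → ℕ → Prop
  | nil (e) : WA i j e e 1 0
  | snoc {e e' g n} (e'' : Bool) (k : ℤ) (g' : F) (n' : ℕ) : WA i j e e' g n → OKk e' e'' k →
      g' = g * FreeGroup.of j ^ k * sg i e'' →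
      n' = n + (-k).toNat + (if e'' then 0 else 1) →
      WA i j e e'' g' n'

lemma WL.append {p q r L M} (h : WL p q L) (h' : WL q r M) : WL p r (L ++ M) := by
  induction h' with
  | nil => simpa using h
  | snoc h1 h2 ih => rw [← List.append_assoc]; exact ih.snoc h2

lemma WL.rep (q : Fin 2 × Bool) (n : ℕ) : WL q q (List.replicate n q) := by
  induction n with
  | zero => exact WL.nil q
  | succ n ih =>
    rw [List.replicate_succ']
    exact ih.snoc ⟨fun _ => rfl, fun h => absurd rfl h⟩

lemma mk_rep_true (j : Fin 2) (n : ℕ) :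
    FreeGroup.mk (List.replicate n (j, true)) = FreeGroup.of j ^ n := by
  induction n with
  | zero => rfl
  | succ n ih => rw [List.replicate_succ', mk_append, ih, pow_succ]; rfl

lemma mk_rep_false (j : Fin 2) (n : ℕ) :
    FreeGroup.mk (List.replicate n (j, false)) = (FreeGroup.of j)⁻¹ ^ n := by
  induction n with
  | zero => rfl
  | succ n ih => rw [List.replicate_succ', mk_append, ih, pow_succ]; rfl

lemma negc_rep_true (j : Fin 2) (n : ℕ) : negc (List.replicate n (j, true)) = 0 := by
  simp [negc]

lemma negc_rep_false (j : Fin 2) (n : ℕ) : negc (List.replicate n (j, false)) = n := by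
  simp [negc, List.countP_replicate]

/-- One block as a letter walk. -/
lemma block_walk {i j : Fin 2} (hij : i ≠ j) (e e' : Bool) (k : ℤ) (h : OKk e e' k) :
    ∃ L, WL (i, e) (i, e') L ∧ FreeGroup.mk L = FreeGroup.of j ^ k * sg i e' ∧
      negc L = (-k).toNat + (if e' then 0 else 1) := by
  have hneg : negc [(i, e')] = if e' then 0 else 1 := by cases e' <;> simp [negc]
  rcases lt_trichotomy k 0 with hk | hk | hk
  · obtain ⟨m, rfl⟩ : ∃ m : ℕ, k = -((m : ℤ) + 1) := ⟨(-k - 1).toNat, by omega⟩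
    have he : e = true ∧ e' = true := by
      cases e <;> cases e' <;> simp [OKk] at h ⊢ <;> try omega
    obtain ⟨rfl, rfl⟩ := he
    refine ⟨List.replicate (m+1) (j, false) ++ [(i, true)], ?_, ?_, ?_⟩
    · refine WL.snoc (q := (j, false)) ?_ ⟨?_, ?_⟩
      · rw [List.replicate_succ]
        exact (WL.append (L := [(j, false)]) (M := List.replicate m (j, false))
          ((WL.nil _).snoc ⟨fun h => absurd h hij, fun _ h => by simp at h⟩) (WL.rep _ _))
      · intro h; exact absurd h.symm hij
      · intro _ _; rfl
    · rw [mk_append, mk_rep_false, sg, zpow_neg, inv_pow]; norm_cast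
    · rw [negc_append, negc_rep_false, hneg]; simp
  · subst hk
    have he : e = e' := by
      cases e <;> cases e' <;> simp [OKk] at h ⊢
    subst he
    refine ⟨[(i, e)], (WL.nil _).snoc ⟨fun _ => rfl, fun h => absurd rfl h⟩, by simp [sg], ?_⟩
    rw [hneg]; simp
  · obtain ⟨m, rfl⟩ : ∃ m : ℕ, k = ((m : ℤ) + 1) := ⟨(k - 1).toNat, by omega⟩
    refine ⟨List.replicate (m+1) (j, true) ++ [(i, e')], ?_, ?_, ?_⟩
    · refine WL.snoc (q := (j, true)) ?_ ⟨?_, ?_⟩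
      · rw [List.replicate_succ]
        exact (WL.append (L := [(j, true)]) (M := List.replicate m (j, true))
          ((WL.nil _).snoc ⟨fun h => absurd h hij, fun _ _ => rfl⟩) (WL.rep _ _))
      · intro h; exact absurd h.symm hij
      · intro _ h; simp at h
    · rw [mk_append, mk_rep_true, sg]; norm_cast
    · rw [negc_append, negc_rep_true, hneg]
      have : (-((m : ℤ) + 1)).toNat = 0 := by omega
      rw [this]

lemma WA.toWL {i j : Fin 2} (hij : i ≠ j) {e e' g n} (h : WA i j e e' g n) :
    ∃ L, WL (i, e) (i, e') L ∧ FreeGroup.mk L = g ∧ negc L = n := by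
  induction h with
  | nil => exact ⟨[], WL.nil _, rfl, rfl⟩
  | snoc e'' k g' n' h hok hg hn ih =>
    obtain ⟨L, h1, h2, h3⟩ := ih
    obtain ⟨M, h4, h5, h6⟩ := block_walk hij _ _ k hok
    refine ⟨L ++ M, h1.append h4, ?_, ?_⟩
    · rw [mk_append, h2, h5, hg, mul_assoc]
    · rw [negc_append, h3, h6, hn, add_assoc]

lemma negc_single (i : Fin 2) (e : Bool) : negc [(i, e)] = if e then 0 else 1 := by
  cases e <;> simp [negc]

lemma WL.toWA_aux {i j : Fin 2} (hij : i ≠ j) {p q L} (h : WL p q L) (e : Bool) (hp : p = (i, e)) :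
    (∀ e', q = (i, e') → WA i j e e' (FreeGroup.mk L) (negc L)) ∧
    (∀ d, q = (j, d) → ∃ e' g n, ∃ k : ℤ, WA i j e e' g n ∧
      FreeGroup.mk L = g * FreeGroup.of j ^ k ∧ negc L = n + (-k).toNat ∧
      (d = true → 1 ≤ k) ∧ (d = false → k ≤ -1 ∧ e' = true)) := by
  induction h with
  | nil =>
    subst hp
    refine ⟨?_, ?_⟩
    · intro e' h; obtain rfl : e = e' := by simpa using h
      exact WA.nil _
    · intro d h; exact absurd (congrArg Prod.fst h) hij
  | @snoc q r L h1 h2 ih =>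
    obtain ⟨ihi, ihj⟩ := ih
    obtain ⟨qi, qe⟩ := q
    have hq : qi = i ∨ qi = j := by omega
    obtain ⟨t1, t2⟩ := h2
    refine ⟨?_, ?_⟩
    · rintro e' rfl
      rcases hq with rfl | rfl
      · obtain rfl : qe = e' := t1 rfl
        refine WA.snoc _ 0 _ _ (ihi _ rfl) (by cases qe <;> simp [OKk]) ?_ ?_
        · rw [mk_append]; simp [sg]
        · rw [negc_append, negc_single]; simp
      · obtain ⟨e1, g, n, k, hw, hg, hn, k1, k2⟩ := ihj _ rfl
        refine WA.snoc _ k _ _ hw ?_ ?_ ?_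
        · cases qe with
          | true => have := k1 rfl; cases e1 <;> cases e' <;> simp [OKk] <;> omega
          | false =>
            obtain ⟨k3, rfl⟩ := k2 rfl
            have h5 : e' = true := t2 (fun h => hij h.symm) rfl
            subst h5; trivial
        · rw [mk_append, hg]; rfl
        · rw [negc_append, negc_single, hn]
    · rintro d rfl
      rcases hq with rfl | rfl
      · refine ⟨qe, _, _, if d then 1 else -1, ihi _ rfl, ?_, ?_, ?_, ?_⟩
        · rw [mk_append]; cases d
          · simp; rfl
          · simp; rfl
        · rw [negc_append, negc_single]; cases d <;> simp
        · rintro rfl; simp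
        · rintro rfl; simp
          cases qe with
          | true => rfl
          | false => exact absurd (t2 hij rfl) (by simp)
      · obtain rfl : qe = d := t1 rfl
        obtain ⟨e1, g, n, k, hw, hg, hn, k1, k2⟩ := ihj _ rfl
        cases qe with
        | true =>
          have := k1 rfl
          refine ⟨e1, g, n, k + 1, hw, ?_, ?_, ?_, ?_⟩
          · rw [mk_append, hg, zpow_add_one, mul_assoc]; rfl
          · rw [negc_append, negc_single, hn]; simp; omega
          · intro _; omega
          · simp
        | false =>
          obtain ⟨h3, h4⟩ := k2 rfl
          refine ⟨e1, g, n, k - 1, hw, ?_, ?_, ?_, ?_⟩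
          · rw [mk_append, hg, zpow_sub_one, mul_assoc]; rfl
          · rw [negc_append, negc_single, hn]; simp; omega
          · simp
          · intro _; exact ⟨by omega, h4⟩

lemma WL.split {i j : Fin 2} (hij : i ≠ j) {p q L} (h : WL p q L) (d : Bool) (hp : p = (j, d)) :
    (∃ e L1 L2, L = L1 ++ L2 ∧ WL p (i, e) L1 ∧ WL (i, e) q L2) ∨
    (q = p ∧ ∃ k : ℤ, FreeGroup.mk L = FreeGroup.of j ^ k) := by
  induction h with
  | nil => exact Or.inr ⟨rfl, 0, by simp; rfl⟩
  | @snoc q r L h1 h2 ih =>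
    obtain ⟨ri, re⟩ := r
    have hr : ri = i ∨ ri = j := by omega
    rcases hr with rfl | rfl
    · exact Or.inl ⟨re, L ++ [(ri, re)], [], by simp, h1.snoc h2, WL.nil _⟩
    · rcases ih with ⟨e, L1, L2, rfl, h3, h4⟩ | ⟨rfl, k, hk⟩
      · exact Or.inl ⟨e, L1, L2 ++ [(ri, re)], by simp, h3, h4.snoc h2⟩
      · right
        subst hp
        obtain rfl : d = re := h2.1 rfl
        refine ⟨rfl, if d then k + 1 else k - 1, ?_⟩
        rw [mk_append, hk]
        cases d
        · simp [zpow_sub_one]; rfl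
        · simp [zpow_add_one]; rfl

/-- Block form of a closed walk. -/
lemma TT.toWA {i j : Fin 2} (hij : i ≠ j) {u n} (h : TT u n) :
    (∃ e g, WA i j e e g n ∧ IsConj u g) ∨ (∃ k : ℤ, IsConj u (FreeGroup.of j ^ k)) := by
  obtain ⟨⟨pi, pe⟩, L, hw, hc, rfl⟩ := h
  have hp : pi = i ∨ pi = j := by omega
  rcases hp with rfl | rfl
  · exact Or.inl ⟨pe, _, (hw.toWA_aux hij pe rfl).1 _ rfl, hc⟩
  · rcases hw.split hij pe rfl with ⟨e, L1, L2, rfl, h3, h4⟩ | ⟨_, k, hk⟩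
    · left
      refine ⟨e, FreeGroup.mk (L2 ++ L1), ?_, hc.trans ?_⟩
      · rw [negc_append, add_comm, ← negc_append]
        exact ((h4.append h3).toWA_aux hij e rfl).1 _ rfl
      · rw [isConj_iff]
        exact ⟨(FreeGroup.mk L1)⁻¹, by rw [mk_append, mk_append]; group⟩
    · exact Or.inr ⟨k, hk ▸ hc⟩

lemma WA.toTT {i j : Fin 2} (hij : i ≠ j) {e g n u} (h : WA i j e e g n) (hc : IsConj u g) :
    TT u n := by
  obtain ⟨L, h1, h2, h3⟩ := h.toWL hij
  exact ⟨_, L, h1, h2 ▸ hc, h3.symm⟩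

/-- Pending factor. -/
def pend (j : Fin 2) (e : Bool) : F := if e then FreeGroup.of j else 1

/-- The functor induced by the inverse of an elementary automorphism. -/
lemma WA.step {i j : Fin 2} (r : MulAut F)
    (hi : r (FreeGroup.of i) = FreeGroup.of i * FreeGroup.of j)
    (hj : r (FreeGroup.of j) = FreeGroup.of j) {e e' g m} (h : WA i j e e' g m) :
    ∃ g' n, WA i j e e' g' n ∧ r g' = (pend j e)⁻¹ * g * pend j e' ∧
      (m < n ∨ (n = m ∧ g' ∈ Submonoid.closure
        ({FreeGroup.of i, FreeGroup.of j, FreeGroup.of j * (FreeGroup.of i)⁻¹} : Set F))) := by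
  induction h with
  | nil => exact ⟨1, 0, WA.nil _, by simp, Or.inr ⟨rfl, one_mem _⟩⟩
  | @snoc e1 g m e2 k g2 m2 h hok hg hm ih =>
    obtain ⟨g', n, hw, hr, hn⟩ := ih
    set M := Submonoid.closure
        ({FreeGroup.of i, FreeGroup.of j, FreeGroup.of j * (FreeGroup.of i)⁻¹} : Set F) with hM
    have Mi : FreeGroup.of i ∈ M := Submonoid.subset_closure (by simp)
    have Mj : FreeGroup.of j ∈ M := Submonoid.subset_closure (by simp)
    have Mji : FreeGroup.of j * (FreeGroup.of i)⁻¹ ∈ M := Submonoid.subset_closure (by simp)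
    have Mk : ∀ k : ℤ, 0 ≤ k → FreeGroup.of j ^ k ∈ M := by
      intro k hk
      obtain ⟨m, rfl⟩ := Int.eq_ofNat_of_zero_le hk
      simpa using pow_mem Mj m
    have Mk' : ∀ k : ℤ, 1 ≤ k → FreeGroup.of j ^ k * (FreeGroup.of i)⁻¹ ∈ M := by
      intro k hk
      have h1 := mul_mem (Mk (k - 1) (by omega)) Mji
      rwa [← mul_assoc, ← zpow_add_one, sub_add_cancel] at h1
    subst hg hm
    cases e1 <;> cases e2
    · refine ⟨_, _, hw.snoc false (k + 1) _ _ ?_ rfl rfl, ?_, ?_⟩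
      · simp [OKk] at hok ⊢; omega
      · simp only [map_mul, map_zpow, hr, hj, sg_false, map_inv, hi, pend]
        simp; group
      · simp [OKk] at hok
        rcases hn with hn | ⟨rfl, hn⟩
        · left; omega
        · right
          refine ⟨by omega, ?_⟩
          rw [mul_assoc, sg_false]
          exact mul_mem hn (Mk' _ (by omega))
    · refine ⟨_, _, hw.snoc true k _ _ ?_ rfl rfl, ?_, ?_⟩
      · simpa [OKk] using hok
      · simp only [map_mul, map_zpow, hr, hj, sg_true, map_inv, hi, pend]
        simp [mul_assoc]
      · simp [OKk] at hok
        rcases hn with hn | ⟨rfl, hn⟩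
        · left; omega
        · right
          refine ⟨by omega, ?_⟩
          rw [sg_true]
          exact mul_mem (mul_mem hn (Mk _ (by omega))) Mi
    · refine ⟨_, _, hw.snoc false k _ _ ?_ rfl rfl, ?_, ?_⟩
      · simpa [OKk] using hok
      · simp only [map_mul, map_zpow, hr, hj, sg_false, map_inv, hi, pend]
        simp; group
      · simp [OKk] at hok
        rcases hn with hn | ⟨rfl, hn⟩
        · left; omega
        · right
          refine ⟨by omega, ?_⟩
          rw [mul_assoc, sg_false]
          exact mul_mem hn (Mk' _ (by omega))
    · refine ⟨_, _, hw.snoc true (k - 1) _ _ ?_ rfl rfl, ?_, ?_⟩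
      · trivial
      · simp only [map_mul, map_zpow, hr, hj, sg_true, map_inv, hi, pend]
        simp; group
      · rcases hn with hn | ⟨rfl, hn⟩
        · left; omega
        · by_cases hk : k ≤ 0
          · left; omega
          · right
            refine ⟨by omega, ?_⟩
            rw [sg_true]
            exact mul_mem (mul_mem hn (Mk _ (by omega))) Mi

/-- Closed version. -/
lemma TT.step {i j : Fin 2} (hij : i ≠ j) (r : MulAut F)
    (hi : r (FreeGroup.of i) = FreeGroup.of i * FreeGroup.of j)
    (hj : r (FreeGroup.of j) = FreeGroup.of j) {u m} (h : TT (r u) m) :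
    ∃ n, TT u n ∧ (m < n ∨ (∃ g ∈ Submonoid.closure
        ({FreeGroup.of i, FreeGroup.of j, FreeGroup.of j * (FreeGroup.of i)⁻¹} : Set F),
        IsConj u g) ∨ ∃ k : ℤ, IsConj u (FreeGroup.of j ^ k)) := by
  have key : ∀ x y : F, IsConj (r x) (r y) → IsConj x y := by
    intro x y h
    rw [isConj_iff] at h ⊢
    obtain ⟨c, hc⟩ := h
    exact ⟨r⁻¹ c, r.injective (by simp [← hc])⟩
  rcases h.toWA hij with ⟨e, g, hw, hc⟩ | ⟨k, hk⟩
  · obtain ⟨g', n, h1, h2, h3⟩ := hw.step r hi hj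
    have hc' : IsConj u g' := by
      apply key
      refine hc.trans ?_
      rw [isConj_iff, h2]
      exact ⟨(pend j e)⁻¹, by simp⟩
    refine ⟨n, h1.toTT hij hc', ?_⟩
    rcases h3 with h3 | ⟨_, h3⟩
    · exact Or.inl h3
    · exact Or.inr (Or.inl ⟨_, h3, hc'⟩)
  · have hk' : IsConj u (FreeGroup.of j ^ k) := by
      apply key
      simpa [hj] using hk
    refine ⟨m, ?_, Or.inr (Or.inr ⟨k, hk'⟩)⟩
    obtain ⟨p, L, h1, h2, h3⟩ := h
    exact ⟨p, L, h1, hk'.trans (hk.symm.trans h2), h3⟩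

lemma WL.chain {p q L} (h : WL p q L) :
    (p :: L).IsChain (fun a b : Fin 2 × Bool => a.1 = b.1 → a.2 = b.2) ∧
      (p :: L).getLast? = some q := by
  induction h with
  | nil => simp
  | @snoc q r L h1 h2 ih =>
    obtain ⟨h3, h4⟩ := ih
    rw [← List.cons_append]
    refine ⟨?_, List.getLast?_concat⟩
    rw [List.isChain_append]
    refine ⟨h3, by simp, ?_⟩
    intro x hx y hy
    rw [h4] at hx
    simp at hx hy
    subst hx hy
    exact h2.1

lemma WL.cyc {p L} (h : WL p p L) : FreeGroup.IsCyclicallyReduced L := by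
  obtain ⟨h1, h2⟩ := h.chain
  refine ⟨?_, ?_⟩
  · exact h1.tail
  · intro a ha b hb
    cases L with
    | nil => simp at ha
    | cons c L =>
      simp at hb; subst hb
      rw [List.getLast?_cons_cons] at h2
      rw [Option.mem_def, h2] at ha
      simp at ha; subst ha
      exact (List.isChain_cons_cons.1 h1).1

lemma len_eq (w : F) : len w = FreeGroup.norm w := rfl

lemma cyc_le {L} (h : FreeGroup.IsCyclicallyReduced L) {w : F} (hc : IsConj (FreeGroup.mk L) w) :
    L.length ≤ len w := by
  rw [isConj_iff] at hc
  obtain ⟨c, hc⟩ := hc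
  have hw : FreeGroup.mk L = c⁻¹ * w * c := by rw [← hc]; group
  have h1 : ∀ n : ℕ, len (FreeGroup.mk L ^ n) = n * L.length := by
    intro n
    rw [FreeGroup.pow_mk, len, FreeGroup.toWord_mk, (h.flatten_replicate n).isReduced.reduce_eq]
    simp
  have h2 : ∀ n : ℕ, len (w ^ n) ≤ n * len w := by
    intro n
    induction n with
    | zero => simp [len]
    | succ n ih =>
      rw [pow_succ]
      have := FreeGroup.norm_mul_le (w ^ n) w
      simp only [← len_eq] at this
      linarith
  have h3 : ∀ n : ℕ, n * L.length ≤ n * len w + 2 * len c := by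
    intro n
    rw [← h1, hw]
    have : (c⁻¹ * w * c) ^ n = c⁻¹ * w ^ n * c := by
      have := conj_pow (i := n) (a := c⁻¹) (b := w)
      simpa using this
    rw [this]
    have a1 := FreeGroup.norm_mul_le (c⁻¹ * w ^ n) c
    have a2 := FreeGroup.norm_mul_le (c⁻¹) (w ^ n)
    rw [FreeGroup.norm_inv_eq] at a2
    simp only [← len_eq] at a1 a2
    have := h2 n
    omega
  by_contra hlt
  push Not at hlt
  have := h3 (2 * len c + 1)
  nlinarith

lemma TT.le {u n} (h : TT u n) : n ≤ cyclen u := by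
  obtain ⟨p, L, h1, h2, rfl⟩ := h
  have hne : {n | ∃ g : F, len (g * u * g⁻¹) = n}.Nonempty := ⟨_, 1, rfl⟩
  obtain ⟨g, hg⟩ := Nat.sInf_mem hne
  have h3 : IsConj (FreeGroup.mk L) (g * u * g⁻¹) :=
    h2.symm.trans (isConj_iff.2 ⟨g, rfl⟩)
  have := cyc_le h1.cyc h3
  rw [hg] at this
  exact List.countP_le_length.trans this


/-! ## Part B : chains -/

lemma mkAut_apply (x y xi yi : F) (h1 h2 h3 h4) (w : F) :
    mkAut x y xi yi h1 h2 h3 h4 w = FreeGroup.lift ![x, y] w := rfl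

lemma mkAut_inv_apply (x y xi yi : F) (h1 h2 h3 h4) (w : F) :
    (mkAut x y xi yi h1 h2 h3 h4)⁻¹ w = FreeGroup.lift ![xi, yi] w := rfl

lemma σ_a : σ ga = ga * gb := by simp [σ, mkAut_apply, ga]
lemma σ_b : σ gb = gb := by simp [σ, mkAut_apply, gb]
lemma σ_a' : (MulEquiv.symm σ) ga = ga * gb⁻¹ := by
  change FreeGroup.lift ![ga * gb⁻¹, gb] ga = _
  simp [ga]
lemma σ_b' : (MulEquiv.symm σ) gb = gb := by
  change FreeGroup.lift ![ga * gb⁻¹, gb] gb = _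
  simp [gb]
lemma τ_a : τ ga = ga := by simp [τ, mkAut_apply, ga]
lemma τ_b : τ gb = gb * ga := by simp [τ, mkAut_apply, gb]
lemma τ_a' : (MulEquiv.symm τ) ga = ga := by
  change FreeGroup.lift ![ga, gb * ga⁻¹] ga = _
  simp [ga]
lemma τ_b' : (MulEquiv.symm τ) gb = gb * ga⁻¹ := by
  change FreeGroup.lift ![ga, gb * ga⁻¹] gb = _
  simp [gb]

/-- Swap. -/
def chi : MulAut F := mkAut gb ga gb ga
    (by simp [ga, gb]) (by simp [ga, gb]) (by simp [ga, gb]) (by simp [ga, gb])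
/-- Flip of `b`. -/
def iot : MulAut F := mkAut ga gb⁻¹ ga gb⁻¹
    (by simp [ga, gb]) (by simp [ga, gb]) (by simp [ga, gb]) (by simp [ga, gb])

lemma chi_a : chi ga = gb := by simp [chi, mkAut_apply, ga]
lemma chi_b : chi gb = ga := by simp [chi, mkAut_apply, gb]
lemma iot_a : iot ga = ga := by simp [iot, mkAut_apply, ga]
lemma iot_b : iot gb = gb⁻¹ := by simp [iot, mkAut_apply, gb]

lemma aut_ext {f g : MulAut F} (ha : f ga = g ga) (hb : f gb = g gb) : f = g := by
  have : (f : F →* F) = (g : F →* F) := by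
    ext i
    fin_cases i
    · exact ha
    · exact hb
  ext w
  exact DFunLike.congr_fun this w

lemma chi_chi : chi * chi = 1 := by
  apply aut_ext <;> simp [MulAut.mul_apply, chi_a, chi_b]
lemma iot_iot : iot * iot = 1 := by
  apply aut_ext <;> simp [MulAut.mul_apply, iot_a, iot_b]

/-- The elementary automorphisms. -/
def rho (i : Fin 2) : MulAut F := if i = 0 then σ else τ

lemma rho_i {i j : Fin 2} (h : i ≠ j) :
    rho i (FreeGroup.of i) = FreeGroup.of i * FreeGroup.of j := by
  have : (i = 0 ∧ j = 1) ∨ (i = 1 ∧ j = 0) := by omega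
  rcases this with ⟨rfl, rfl⟩ | ⟨rfl, rfl⟩
  · exact σ_a
  · exact τ_b

lemma rho_j {i j : Fin 2} (h : i ≠ j) : rho i (FreeGroup.of j) = FreeGroup.of j := by
  have : (i = 0 ∧ j = 1) ∨ (i = 1 ∧ j = 0) := by omega
  rcases this with ⟨rfl, rfl⟩ | ⟨rfl, rfl⟩
  · exact σ_b
  · exact τ_a

/-- Elementary automorphisms and inverses. -/
def rr (e : Bool) (i : Fin 2) : MulAut F := if e then rho i else (rho i)⁻¹

/-- Chains. -/
def CC (e : Bool) (l : List (Fin 2)) : MulAut F := (l.map (rr e)).prod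

lemma CC_cons (e i l) : CC e (i :: l) = rr e i * CC e l := by simp [CC]
lemma CC_snoc (e i l) : CC e (l ++ [i]) = CC e l * rr e i := by simp [CC]
lemma CC_nil (e) : CC e [] = 1 := rfl

/-- Sign-coherence up to conjugation. -/
def good (w : F) : Prop :=
  ∃ e d, ∃ g ∈ Submonoid.closure ({sg 0 e, sg 1 d} : Set F), IsConj w g

/-- Positivity up to conjugation. -/
def Pos (w : F) : Prop := ∃ g ∈ Submonoid.closure ({ga, gb} : Set F), IsConj w g

lemma Pos.good {w} (h : Pos w) : good w := by
  obtain ⟨g, h1, h2⟩ := h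
  exact ⟨true, true, g, h1, h2⟩

lemma isConj_map (f : MulAut F) {x y : F} (h : IsConj x y) : IsConj (f x) (f y) := by
  rw [isConj_iff] at h ⊢
  obtain ⟨c, rfl⟩ := h
  exact ⟨f c, by simp⟩

lemma closure_map (f : MulAut F) {S : Set F} {N : Submonoid F} (h : ∀ x ∈ S, f x ∈ N)
    {g} (hg : g ∈ Submonoid.closure S) : f g ∈ N := by
  have : Submonoid.closure S ≤ N.comap (f : F →* F) := by
    rw [Submonoid.closure_le]
    intro x hx
    exact h x hx
  exact this hg

lemma good_chi {w} (h : good w) : good (chi w) := by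
  obtain ⟨e, d, g, h1, h2⟩ := h
  refine ⟨d, e, chi g, closure_map chi ?_ h1, isConj_map _ h2⟩
  have ha : chi (sg 0 e) = sg 1 e := by
    cases e
    · rw [sg_false, sg_false, map_inv]; exact congrArg _ chi_a
    · exact chi_a
  have hb : chi (sg 1 d) = sg 0 d := by
    cases d
    · rw [sg_false, sg_false, map_inv]; exact congrArg _ chi_b
    · exact chi_b
  rintro x (rfl | rfl)
  · rw [ha]; exact Submonoid.subset_closure (by simp)
  · rw [hb]; exact Submonoid.subset_closure (by simp)

lemma good_iot {w} (h : good w) : good (iot w) := by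
  obtain ⟨e, d, g, h1, h2⟩ := h
  refine ⟨e, !d, iot g, closure_map iot ?_ h1, isConj_map _ h2⟩
  have ha : iot (sg 0 e) = sg 0 e := by
    cases e
    · rw [sg_false, map_inv]; exact congrArg _ iot_a
    · exact iot_a
  have hb : iot (sg 1 d) = sg 1 (!d) := by
    cases d
    · rw [sg_false, map_inv]; exact (congrArg _ iot_b).trans (inv_inv _)
    · exact iot_b
  rintro x (rfl | rfl)
  · rw [ha]; exact Submonoid.subset_closure (by simp)
  · rw [hb]; exact Submonoid.subset_closure (by simp)

lemma good_conj {x y : F} (h : IsConj x y) (hx : good x) : good y := by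
  obtain ⟨e, d, g, h1, h2⟩ := hx
  exact ⟨e, d, g, h1, h.symm.trans h2⟩

/-- Submonoid generated by the signed permutations and inner automorphisms. -/
def KK : Submonoid (MulAut F) :=
  Submonoid.closure ({chi, iot} ∪ Set.range (MulAut.conj : F →* MulAut F))

lemma chi_mem : chi ∈ KK := Submonoid.subset_closure (by simp)
lemma iot_mem : iot ∈ KK := Submonoid.subset_closure (by simp)
lemma conj_mem (g : F) : MulAut.conj g ∈ KK := Submonoid.subset_closure (by simp)

lemma isConj_conj (g w : F) : IsConj (MulAut.conj g w) w := by
  rw [isConj_comm, isConj_iff]; exact ⟨g, by simp⟩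

lemma good_KK {k} (hk : k ∈ KK) : ∀ w, good (k w) ↔ good w := by
  induction hk using Submonoid.closure_induction with
  | mem x hx =>
    intro w
    rcases hx with (rfl | rfl) | ⟨g, rfl⟩
    · refine ⟨fun h => ?_, good_chi⟩
      have := good_chi h
      rwa [← MulAut.mul_apply, chi_chi] at this
    · refine ⟨fun h => ?_, good_iot⟩
      have := good_iot h
      rwa [← MulAut.mul_apply, iot_iot] at this
    · exact ⟨good_conj (isConj_conj g w), good_conj (isConj_conj g w).symm⟩
  | one => simp
  | mul x y _ _ hx hy => intro w; rw [MulAut.mul_apply, hx, hy]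

lemma pos_word {g : F} (hg : g ∈ Submonoid.closure ({ga, gb} : Set F)) :
    ∃ L : List (Fin 2 × Bool), (∀ p ∈ L, p.2 = true) ∧ FreeGroup.mk L = g := by
  induction hg using Submonoid.closure_induction with
  | mem x hx =>
    rcases hx with rfl | rfl
    · exact ⟨[(0, true)], by simp, rfl⟩
    · exact ⟨[(1, true)], by simp, rfl⟩
  | one => exact ⟨[], by simp, rfl⟩
  | mul x y _ _ hx hy =>
    obtain ⟨L, h1, h2⟩ := hx
    obtain ⟨M, h3, h4⟩ := hy
    refine ⟨L ++ M, ?_, by rw [mk_append, h2, h4]⟩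
    intro p hp
    rcases List.mem_append.1 hp with hp | hp
    · exact h1 p hp
    · exact h3 p hp

lemma TR_true {p q : Fin 2 × Bool} (hp : p.2 = true) (hq : q.2 = true) : TR p q :=
  ⟨fun _ => hp.trans hq.symm, fun _ _ => hq⟩

lemma pos_walk (L : List (Fin 2 × Bool)) (h : ∀ p ∈ L, p.2 = true) (p) (hp : p.2 = true) :
    ∃ q, q.2 = true ∧ WL p q L := by
  induction L using List.reverseRecOn with
  | nil => exact ⟨p, hp, WL.nil _⟩
  | append_singleton L r ih =>
    obtain ⟨q, h1, h2⟩ := ih (fun p hp => h p (by simp [hp]))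
    have hr := h r (by simp)
    exact ⟨r, hr, h2.snoc (TR_true h1 hr)⟩

lemma Pos.TT {u} (h : Pos u) : TT u 0 := by
  obtain ⟨g, h1, h2⟩ := h
  obtain ⟨L, h3, rfl⟩ := pos_word h1
  have h0 : 0 = negc L := by
    symm; rw [negc, List.countP_eq_zero]
    intro p hp; simp [h3 p hp]
  rcases List.eq_nil_or_concat L with rfl | ⟨M, r, rfl⟩
  · exact ⟨(0, true), [], WL.nil _, h2, rfl⟩
  · rw [List.concat_eq_append] at *
    have hr := h3 r (by simp)
    obtain ⟨q, h4, h5⟩ := pos_walk M (fun p hp => h3 p (by simp [hp])) r hr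
    exact ⟨r, _, h5.snoc (TR_true h4 hr), h2, h0⟩

lemma closure_ij {i j : Fin 2} (h : i ≠ j) :
    FreeGroup.of i ∈ Submonoid.closure ({ga, gb} : Set F) ∧
    FreeGroup.of j ∈ Submonoid.closure ({ga, gb} : Set F) := by
  have ha : ga ∈ Submonoid.closure ({ga, gb} : Set F) := Submonoid.subset_closure (by simp)
  have hb : gb ∈ Submonoid.closure ({ga, gb} : Set F) := Submonoid.subset_closure (by simp)
  have : (i = 0 ∧ j = 1) ∨ (i = 1 ∧ j = 0) := by omega
  rcases this with ⟨rfl, rfl⟩ | ⟨rfl, rfl⟩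
  · exact ⟨ha, hb⟩
  · exact ⟨hb, ha⟩

lemma good_zpow (j : Fin 2) (k : ℤ) {u : F} (h : IsConj u (FreeGroup.of j ^ k)) : good u := by
  have key : ∃ e, FreeGroup.of j ^ k ∈ Submonoid.closure ({sg j e} : Set F) := by
    rcases Int.eq_nat_or_neg k with ⟨n, rfl | rfl⟩
    · refine ⟨true, ?_⟩
      rw [zpow_natCast, sg_true]
      exact pow_mem (Submonoid.subset_closure (Set.mem_singleton _)) n
    · refine ⟨false, ?_⟩
      rw [zpow_neg, zpow_natCast, ← inv_pow, sg_false]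
      exact pow_mem (Submonoid.subset_closure (Set.mem_singleton _)) n
  obtain ⟨e, he⟩ := key
  refine ⟨e, e, _, ?_, h⟩
  refine Submonoid.closure_mono ?_ he
  have : j = 0 ∨ j = 1 := by omega
  rcases this with rfl | rfl <;> simp

lemma main1 (l : List (Fin 2)) : ∀ u, Pos (CC true l u) →
    ∃ n, TT u n ∧ ∃ l', l'.length ≤ n + 1 ∧ good (CC true l' u) := by
  induction l using List.reverseRecOn with
  | nil =>
    intro u h
    exact ⟨0, h.TT, [], by simp, h.good⟩
  | append_singleton l i ih =>
    intro u h
    rw [CC_snoc, MulAut.mul_apply] at h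
    obtain ⟨m, h1, l1, h2, h3⟩ := ih _ h
    obtain ⟨j, hij⟩ : ∃ j, i ≠ j := ⟨i + 1, by fin_cases i <;> decide⟩
    obtain ⟨n, h4, h5⟩ := TT.step hij (rho i) (rho_i hij) (rho_j hij) h1
    refine ⟨n, h4, ?_⟩
    rcases h5 with h5 | ⟨g, hg, hc⟩ | ⟨k, hk⟩
    · exact ⟨l1 ++ [i], by simp; omega, by rw [CC_snoc, MulAut.mul_apply]; exact h3⟩
    · refine ⟨[j], by simp, Pos.good ⟨rho j g, closure_map (rho j) ?_ hg, ?_⟩⟩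
      · obtain ⟨m1, m2⟩ := closure_ij hij
        rintro x (rfl | rfl | rfl)
        · rw [rho_j hij.symm]; exact m1
        · rw [rho_i hij.symm]; exact mul_mem m2 m1
        · rw [map_mul, map_inv, rho_i hij.symm, rho_j hij.symm, mul_inv_cancel_right]; exact m2
      · have := isConj_map (rho j) hc
        simpa [CC, rr] using this
    · exact ⟨[], by simp, good_zpow j k hk⟩

lemma len_inv (w : F) : len w⁻¹ = len w := FreeGroup.norm_inv_eq

lemma cyclen_inv (u : F) : cyclen u⁻¹ = cyclen u := by
  unfold cyclen
  congr 1
  ext n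
  have : ∀ g : F, len (g * u⁻¹ * g⁻¹) = len (g * u * g⁻¹) := by
    intro g
    rw [← len_inv]; congr 1; group
  simp [this]

lemma closure_inv {e d : Bool} {g : F} (h : g ∈ Submonoid.closure ({sg 0 e, sg 1 d} : Set F)) :
    g⁻¹ ∈ Submonoid.closure ({sg 0 (!e), sg 1 (!d)} : Set F) := by
  induction h using Submonoid.closure_induction with
  | mem x hx =>
    apply Submonoid.subset_closure
    rcases hx with rfl | rfl
    · cases e <;> simp [sg_false, sg_true]
    · cases d <;> simp [sg_false, sg_true]
  | one => simp
  | mul x y _ _ hx hy => rw [mul_inv_rev]; exact mul_mem hy hx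

lemma isConj_inv' {x y : F} (h : IsConj x y) : IsConj x⁻¹ y⁻¹ := by
  rw [isConj_iff] at h ⊢
  obtain ⟨c, rfl⟩ := h
  exact ⟨c, by group⟩

lemma good_inv {w} (h : good w) : good w⁻¹ := by
  obtain ⟨e, d, g, h1, h2⟩ := h
  exact ⟨_, _, _, closure_inv h1, isConj_inv' h2⟩

lemma rho_inv_mixed (i : Fin 2) (e : Bool) :
    ∀ x ∈ ({sg 0 e, sg 1 (!e)} : Set F),
      (rho i)⁻¹ x ∈ Submonoid.closure ({sg 0 e, sg 1 (!e)} : Set F) := by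
  have m1 : sg 0 e ∈ Submonoid.closure ({sg 0 e, sg 1 (!e)} : Set F) :=
    Submonoid.subset_closure (by simp)
  have m2 : sg 1 (!e) ∈ Submonoid.closure ({sg 0 e, sg 1 (!e)} : Set F) :=
    Submonoid.subset_closure (by simp)
  have sa := σ_a'
  have sb := σ_b'
  have ta := τ_a'
  have tb := τ_b'
  simp only [ga, gb] at sa sb ta tb
  rintro x (rfl | rfl)
  · fin_cases i
    · cases e
      · simpa [rho, sg_false, sg_true, sa] using mul_mem m2 m1
      · simpa [rho, sg_false, sg_true, sa] using mul_mem m1 m2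
    · cases e
      · simpa [rho, sg_false, sg_true, ta] using m1
      · simpa [rho, sg_false, sg_true, ta] using m1
  · fin_cases i
    · cases e
      · simpa [rho, sg_false, sg_true, sb] using m2
      · simpa [rho, sg_false, sg_true, sb] using m2
    · cases e
      · simpa [rho, sg_false, sg_true, tb] using mul_mem m2 m1
      · simpa [rho, sg_false, sg_true, tb] using mul_mem m1 m2

lemma mixed (e : Bool) (l : List (Fin 2)) : ∀ u,
    (∃ g ∈ Submonoid.closure ({sg 0 e, sg 1 (!e)} : Set F), IsConj (CC true l u) g) →
    ∃ g ∈ Submonoid.closure ({sg 0 e, sg 1 (!e)} : Set F), IsConj u g := by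
  induction l with
  | nil => intro u h; exact h
  | cons i l ih =>
    rintro u ⟨g, h1, h2⟩
    apply ih
    refine ⟨(rho i)⁻¹ g, closure_map _ (rho_inv_mixed i e) h1, ?_⟩
    have := isConj_map (rho i)⁻¹ h2
    simpa [CC_cons, rr] using this

lemma main2 (l : List (Fin 2)) (u : F) (h : good (CC true l u)) :
    ∃ l', l'.length ≤ cyclen u + 1 ∧ good (CC true l' u) := by
  have hp : ∀ u, Pos (CC true l u) → ∃ l', l'.length ≤ cyclen u + 1 ∧ good (CC true l' u) := by
    intro u h
    obtain ⟨n, h1, l', h2, h3⟩ := main1 l u h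
    exact ⟨l', by have := h1.le; omega, h3⟩
  obtain ⟨e, d, g, h1, h2⟩ := h
  have hm : (d = !e) → ∃ l', l'.length ≤ cyclen u + 1 ∧ good (CC true l' u) := by
    rintro rfl
    obtain ⟨g', h3, h4⟩ := mixed e l u ⟨g, h1, h2⟩
    exact ⟨[], by simp, e, !e, g', h3, h4⟩
  cases e <;> cases d
  · have h5 : g⁻¹ ∈ Submonoid.closure ({ga, gb} : Set F) := by
      have := closure_inv h1
      simpa [sg_true, ga, gb] using this
    obtain ⟨l', h3, h4⟩ := hp u⁻¹ ⟨g⁻¹, h5, by rw [map_inv]; exact isConj_inv' h2⟩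
    refine ⟨l', by rwa [cyclen_inv] at h3, ?_⟩
    simpa using good_inv h4
  · exact hm rfl
  · exact hm rfl
  · exact hp u ⟨g, h1, h2⟩

lemma rr_conj (e i) (g : F) : rr e i * MulAut.conj g = MulAut.conj (rr e i g) * rr e i := by
  ext w; simp

lemma iot_rho (i : Fin 2) (e : Bool) : ∃ h, rr (!e) i * iot = MulAut.conj h * iot * rr e i := by
  fin_cases i <;> cases e
  · refine ⟨1, aut_ext ?_ ?_⟩ <;>
      simp [rr, rho, iot_a, iot_b, σ_a, σ_b, σ_a', σ_b']
  · refine ⟨1, aut_ext ?_ ?_⟩ <;>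
      simp [rr, rho, iot_a, iot_b, σ_a, σ_b, σ_a', σ_b']
  · refine ⟨ga⁻¹, aut_ext ?_ ?_⟩ <;>
      simp [rr, rho, iot_a, iot_b, τ_a, τ_b, τ_a', τ_b', mul_assoc]
  · refine ⟨ga, aut_ext ?_ ?_⟩ <;>
      simp [rr, rho, iot_a, iot_b, τ_a, τ_b, τ_a', τ_b', mul_assoc]

lemma CC_iot (l : List (Fin 2)) : ∃ g, CC false l * iot = MulAut.conj g * iot * CC true l := by
  induction l with
  | nil => exact ⟨1, by simp [CC_nil]⟩
  | cons i l ih =>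
    obtain ⟨g, hg⟩ := ih
    obtain ⟨h, hh⟩ := iot_rho i true
    refine ⟨rr false i g * h, ?_⟩
    rw [CC_cons, mul_assoc, hg, ← mul_assoc, ← mul_assoc, rr_conj, mul_assoc (MulAut.conj _)]
    simp only [Bool.not_true] at hh
    rw [hh, CC_cons, map_mul]
    simp only [mul_assoc]

lemma len_iot_mk (L : List (Fin 2 × Bool)) : len (iot (FreeGroup.mk L)) ≤ L.length := by
  induction L with
  | nil =>
    have : FreeGroup.mk ([] : List (Fin 2 × Bool)) = 1 := rfl
    simp [this, len]
  | cons x L ih =>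
    have h1 : FreeGroup.mk (x :: L) = sg x.1 x.2 * FreeGroup.mk L := by
      rw [sg, FreeGroup.mul_mk]; rfl
    have ha := iot_a
    have hb := iot_b
    simp only [ga, gb] at ha hb
    have h2 : len (iot (sg x.1 x.2)) ≤ 1 := by
      obtain ⟨i, e⟩ := x
      fin_cases i <;> cases e <;> simp [sg_false, sg_true, ha, hb, len]
    have h3 := FreeGroup.norm_mul_le (iot (sg x.1 x.2)) (iot (FreeGroup.mk L))
    rw [← map_mul, ← h1] at h3
    simp only [← len_eq] at h3
    simp only [List.length_cons]
    omega

lemma cyclen_iot (u : F) : cyclen (iot u) ≤ cyclen u := by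
  have hne : {n | ∃ g : F, len (g * u * g⁻¹) = n}.Nonempty := ⟨_, 1, rfl⟩
  obtain ⟨g, hg⟩ := Nat.sInf_mem hne
  have h1 : len (iot (g * u * g⁻¹)) ≤ len (g * u * g⁻¹) := by
    have := len_iot_mk (g * u * g⁻¹).toWord
    rwa [FreeGroup.mk_toWord] at this
  rw [hg, map_mul, map_mul, map_inv] at h1
  exact le_trans (Nat.sInf_le ⟨iot g, rfl⟩) h1

lemma main3 (e : Bool) (l : List (Fin 2)) (u : F) (h : good (CC e l u)) :
    ∃ l', l'.length ≤ cyclen u + 1 ∧ good (CC e l' u) := by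
  cases e with
  | true => exact main2 l u h
  | false =>
    have key : ∀ l, good (CC false l u) ↔ good (CC true l (iot u)) := by
      intro l
      obtain ⟨g, hg⟩ := CC_iot l
      have h1 : CC false l u = (MulAut.conj g * iot) (CC true l (iot u)) := by
        have h2 : iot (iot u) = u := by
          rw [← MulAut.mul_apply, iot_iot]; rfl
        have h3 := DFunLike.congr_fun hg (iot u)
        rw [MulAut.mul_apply, h2] at h3
        exact h3
      rw [h1]
      exact good_KK (mul_mem (conj_mem g) iot_mem) _
    obtain ⟨l', h1, h2⟩ := main2 l (iot u) ((key l).1 h)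
    exact ⟨l', h1.trans (by have := cyclen_iot u; omega), (key l').2 h2⟩

/-! ### Factorization -/

/-- Automorphisms that factor as a chain followed by a signed permutation, up to inner ones. -/
def XX (f : MulAut F) : Prop := ∃ k ∈ KK, ∃ e l, f = k * CC e l

lemma XX.left {k f} (hk : k ∈ KK) (h : XX f) : XX (k * f) := by
  obtain ⟨k', hk', e, l, rfl⟩ := h
  exact ⟨k * k', mul_mem hk hk', e, l, by rw [mul_assoc]⟩

lemma QQ {k} (hk : k ∈ KK) : ∀ e i, ∃ k' ∈ KK, ∃ e' i', rr e i * k = k' * rr e' i' := by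
  induction hk using Submonoid.closure_induction with
  | mem x hx =>
    intro e i
    rcases hx with (rfl | rfl) | ⟨g, rfl⟩
    · refine ⟨chi, chi_mem, e, i + 1, ?_⟩
      fin_cases i <;> cases e <;> apply aut_ext <;>
        simp [rr, rho, chi_a, chi_b, σ_a, σ_b, σ_a', σ_b', τ_a, τ_b, τ_a', τ_b']
    · obtain ⟨h, hh⟩ := iot_rho i (!e)
      rw [Bool.not_not] at hh
      exact ⟨_, mul_mem (conj_mem h) iot_mem, _, _, hh⟩
    · exact ⟨_, conj_mem _, _, _, rr_conj e i g⟩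
  | one => intro e i; exact ⟨1, one_mem _, e, i, by simp⟩
  | mul x y _ _ hx hy =>
    intro e i
    obtain ⟨k1, h1, e1, i1, h2⟩ := hx e i
    obtain ⟨k2, h3, e2, i2, h4⟩ := hy e1 i1
    exact ⟨k1 * k2, mul_mem h1 h3, e2, i2, by rw [← mul_assoc, h2, mul_assoc, h4, mul_assoc]⟩

lemma rel (e : Bool) {i j : Fin 2} (hij : i ≠ j) :
    ∃ k ∈ KK, rr (!e) i * rr e j = k * rr e i := by
  have : (i = 0 ∧ j = 1) ∨ (i = 1 ∧ j = 0) := by omega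
  rcases this with ⟨rfl, rfl⟩ | ⟨rfl, rfl⟩ <;> cases e
  · refine ⟨MulAut.conj ga * chi * iot, mul_mem (mul_mem (conj_mem _) chi_mem) iot_mem, ?_⟩
    apply aut_ext <;>
      simp [rr, rho, chi_a, chi_b, iot_a, iot_b, σ_a, σ_b, σ_a', σ_b', τ_a, τ_b, τ_a', τ_b', mul_assoc]
  · refine ⟨MulAut.conj gb * iot * chi, mul_mem (mul_mem (conj_mem _) iot_mem) chi_mem, ?_⟩
    apply aut_ext <;>
      simp [rr, rho, chi_a, chi_b, iot_a, iot_b, σ_a, σ_b, σ_a', σ_b', τ_a, τ_b, τ_a', τ_b', mul_assoc]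
  · refine ⟨MulAut.conj gb * iot * chi, mul_mem (mul_mem (conj_mem _) iot_mem) chi_mem, ?_⟩
    apply aut_ext <;>
      simp [rr, rho, chi_a, chi_b, iot_a, iot_b, σ_a, σ_b, σ_a', σ_b', τ_a, τ_b, τ_a', τ_b', mul_assoc]
  · refine ⟨MulAut.conj ga * chi * iot, mul_mem (mul_mem (conj_mem _) chi_mem) iot_mem, ?_⟩
    apply aut_ext <;>
      simp [rr, rho, chi_a, chi_b, iot_a, iot_b, σ_a, σ_b, σ_a', σ_b', τ_a, τ_b, τ_a', τ_b', mul_assoc]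

lemma rr_cancel (e : Bool) (i : Fin 2) : rr (!e) i * rr e i = 1 := by
  cases e <;> simp [rr]

lemma XX.rr {f} (e i) (h : XX f) : XX (rr e i * f) := by
  obtain ⟨k, hk, e1, l, rfl⟩ := h
  obtain ⟨k', hk', e', i', h1⟩ := QQ hk e i
  rw [← mul_assoc, h1, mul_assoc]
  apply XX.left hk'
  by_cases he : e' = e1
  · subst he
    exact ⟨1, one_mem _, e', i' :: l, by rw [CC_cons, one_mul]⟩
  · have he : e' = !e1 := by cases e' <;> cases e1 <;> simp at he ⊢
    subst he
    cases l with
    | nil => exact ⟨1, one_mem _, !e1, [i'], by simp [CC]⟩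
    | cons j l =>
      by_cases hij : i' = j
      · subst hij
        exact ⟨1, one_mem _, e1, l, by rw [CC_cons, ← mul_assoc, rr_cancel]⟩
      · obtain ⟨k2, hk2, h2⟩ := rel e1 hij
        exact ⟨k2, hk2, e1, i' :: l, by rw [CC_cons, ← mul_assoc, h2, CC_cons, mul_assoc]⟩

/-- The subgroup generated by the obvious automorphisms. -/
def HH : Subgroup (MulAut F) :=
  Subgroup.closure ({chi, iot, σ} ∪ Set.range (MulAut.conj : F →* MulAut F))

lemma HH_XX {f} (hf : f ∈ HH) : XX f := by
  induction hf using Subgroup.closure_induction_left with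
  | one => exact ⟨1, one_mem _, true, [], by simp [CC_nil]⟩
  | mul_left x hx y _ ih =>
    rcases hx with (rfl | rfl | rfl) | ⟨g, rfl⟩
    · exact ih.left chi_mem
    · exact ih.left iot_mem
    · exact ih.rr true 0
    · exact ih.left (conj_mem g)
  | inv_mul_cancel x hx y _ ih =>
    rcases hx with (rfl | rfl | rfl) | ⟨g, rfl⟩
    · rw [inv_eq_of_mul_eq_one_left chi_chi]; exact ih.left chi_mem
    · rw [inv_eq_of_mul_eq_one_left iot_iot]; exact ih.left iot_mem
    · exact ih.rr false 0
    · rw [← map_inv]; exact ih.left (conj_mem _)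

/-! ### Assembly -/

lemma good_W1 {w} (h : good w) : ∃ β : MulAut F, IsW1 β ∧ ∃ g : F, IsPositive (g * β w * g⁻¹) := by
  have fin : ∀ β : MulAut F, Pos (β w) → ∃ g : F, IsPositive (g * β w * g⁻¹) := by
    rintro β ⟨g, h1, h2⟩
    obtain ⟨c, rfl⟩ := isConj_iff.1 h2
    exact ⟨c, h1⟩
  obtain ⟨e, d, g, h1, h2⟩ := h
  have m1 : ga ∈ Submonoid.closure ({ga, gb} : Set F) := Submonoid.subset_closure (by simp)
  have m2 : gb ∈ Submonoid.closure ({ga, gb} : Set F) := Submonoid.subset_closure (by simp)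
  have key : ∀ β : MulAut F, IsW1 β → β (sg 0 e) ∈ Submonoid.closure ({ga, gb} : Set F) →
      β (sg 1 d) ∈ Submonoid.closure ({ga, gb} : Set F) →
      ∃ β : MulAut F, IsW1 β ∧ ∃ g : F, IsPositive (g * β w * g⁻¹) := by
    intro β hβ ha hb
    refine ⟨β, hβ, fin β ⟨β g, closure_map β ?_ h1, isConj_map β h2⟩⟩
    rintro x (rfl | rfl)
    · exact ha
    · exact hb
  have sa : sg 0 e = if e then ga else ga⁻¹ := by cases e <;> rfl
  have sb : sg 1 d = if d then gb else gb⁻¹ := by cases d <;> rfl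
  rw [sa, sb] at key
  cases e <;> cases d
  · apply key (iot * chi * iot * chi)
    · simp [IsW1, chi_a, chi_b, iot_a, iot_b]
    · simpa [chi_a, chi_b, iot_a, iot_b] using m1
    · simpa [chi_a, chi_b, iot_a, iot_b] using m2
  · apply key (chi * iot * chi)
    · simp [IsW1, chi_a, chi_b, iot_a, iot_b]
    · simpa [chi_a, chi_b, iot_a, iot_b] using m1
    · simpa [chi_a, chi_b, iot_a, iot_b] using m2
  · apply key iot
    · simp [IsW1, iot_a, iot_b]
    · simpa [iot_a, iot_b] using m1
    · simpa [iot_a, iot_b] using m2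
  · apply key 1
    · simp [IsW1]
    · simpa using m1
    · simpa using m2

/-- Letter to exponents. -/
def pr (i : Fin 2) : ℕ × ℕ := if i = 0 then (1, 0) else (0, 1)

lemma chain_true (l : List (Fin 2)) : chainC1 (l.map pr) = CC true l := by
  unfold chainC1 CC
  rw [List.map_map]
  congr 2
  ext1 i
  fin_cases i <;> simp [pr, rr, rho]

lemma chain_false (l : List (Fin 2)) : chainC2 (l.map pr) = CC false l := by
  unfold chainC2 CC
  rw [List.map_map]
  congr 2
  ext1 i
  fin_cases i <;> simp [pr, rr, rho]

lemma chainLen_pr (l : List (Fin 2)) : chainLen (l.map pr) = l.length := by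
  induction l with
  | nil => rfl
  | cons i l ih =>
    simp only [chainLen, sigmaCount, tauCount, List.map_cons, List.sum_cons, List.length_cons] at ih ⊢
    have : (pr i).1 + (pr i).2 = 1 := by fin_cases i <;> rfl
    omega

lemma assembly (hH : ∀ φ : MulAut F, φ ∈ HH) (u : F)
    (h : ∃ φ : MulAut F, ∃ g : F, IsPositive (g * φ u * g⁻¹)) :
    ∃ c : List (ℕ × ℕ), c ≠ [] ∧ chainLen c ≤ 2 * cyclen u + 3 ∧
      ∃ ψ : MulAut F, (ψ = chainC1 c ∨ ψ = chainC2 c) ∧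
        ∃ β : MulAut F, IsW1 β ∧ ∃ g : F, IsPositive (g * β (ψ u) * g⁻¹) := by
  obtain ⟨φ, g, hg⟩ := h
  have h1 : good (φ u) := Pos.good ⟨_, hg, isConj_iff.2 ⟨g, rfl⟩⟩
  obtain ⟨k, hk, e, l, rfl⟩ := HH_XX (hH φ)
  rw [MulAut.mul_apply, good_KK hk] at h1
  obtain ⟨l', h2, h3⟩ := main3 e l u h1
  refine ⟨(0, 0) :: l'.map pr, by simp, ?_, CC e l', ?_, good_W1 h3⟩
  · have := chainLen_pr l'
    simp only [chainLen, sigmaCount, tauCount, List.map_cons, List.sum_cons] at this ⊢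
    omega
  · cases e
    · right
      rw [← chain_false]; simp [chainC2]
    · left
      rw [← chain_true]; simp [chainC1]


/-! ## Part C : Nielsen generators -/

/-- Length of the longest common prefix. -/
def lcp : List (Fin 2 × Bool) → List (Fin 2 × Bool) → ℕ
  | x :: L, y :: M => if x = y then lcp L M + 1 else 0
  | _, _ => 0

lemma lcp_ultra : ∀ A B C : List (Fin 2 × Bool), min (lcp A B) (lcp B C) ≤ lcp A C
  | x :: A, y :: B, z :: C => by
    have ih := lcp_ultra A B C
    unfold lcp
    split_ifs <;> simp_all <;> omega
  | [], _, _ => by simp [lcp]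
  | _ :: _, [], _ => by simp [lcp]
  | _ :: _, _ :: _, [] => by simp [lcp]

lemma mk_cons' (x : Fin 2 × Bool) (L : List (Fin 2 × Bool)) :
    FreeGroup.mk (x :: L) = FreeGroup.mk [x] * FreeGroup.mk L := by
  rw [FreeGroup.mul_mk]; rfl

lemma len_lcp : ∀ L M : List (Fin 2 × Bool), FreeGroup.IsReduced L → FreeGroup.IsReduced M →
    len ((FreeGroup.mk L)⁻¹ * FreeGroup.mk M) + 2 * lcp L M = L.length + M.length
  | [], M => by
    intro _ hM
    rw [show FreeGroup.mk ([] : List (Fin 2 × Bool)) = 1 from rfl]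
    simp [lcp, len, hM.reduce_eq]
  | x :: L, [] => by
    intro hL _
    rw [show FreeGroup.mk ([] : List (Fin 2 × Bool)) = 1 from rfl, mul_one, len_inv]
    simp [lcp, len, hL.reduce_eq]
  | x :: L, y :: M => by
    intro hL hM
    by_cases h : x = y
    · subst h
      have ih := len_lcp L M (List.IsChain.tail hL) (List.IsChain.tail hM)
      have : (FreeGroup.mk (x :: L))⁻¹ * FreeGroup.mk (x :: M)
          = (FreeGroup.mk L)⁻¹ * FreeGroup.mk M := by
        rw [mk_cons' x L, mk_cons' x M]; group
      rw [this]
      simp only [lcp, if_true, List.length_cons]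
      omega
    · rw [FreeGroup.inv_mk, FreeGroup.mul_mk, len, FreeGroup.toWord_mk]
      have hr : FreeGroup.IsReduced (FreeGroup.invRev (x :: L) ++ (y :: M)) := by
        refine List.isChain_append.2 ⟨?_, hM, ?_⟩
        · have h1 : (FreeGroup.mk (x :: L)).toWord = x :: L := by
            rw [FreeGroup.toWord_mk, hL.reduce_eq]
          have h2 := FreeGroup.isReduced_toWord (x := (FreeGroup.mk (x :: L))⁻¹)
          rwa [FreeGroup.toWord_inv, h1] at h2
        · intro p hp q hq
          simp [FreeGroup.invRev] at hp hq
          subst hp hq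
          intro h1
          by_contra h2
          apply h
          ext1
          · exact h1
          · revert h2; cases x.2 <;> cases y.2 <;> simp
      rw [hr.reduce_eq]
      simp [lcp, h, FreeGroup.invRev_length]

/-- Gromov product. -/
def GP (g h : F) : ℕ := lcp g.toWord h.toWord

lemma GP_len (g h : F) : len (g⁻¹ * h) + 2 * GP g h = len g + len h := by
  have := len_lcp g.toWord h.toWord FreeGroup.isReduced_toWord FreeGroup.isReduced_toWord
  rwa [FreeGroup.mk_toWord, FreeGroup.mk_toWord] at this

lemma GP_ultra (g h k : F) : min (GP g h) (GP h k) ≤ GP g k := lcp_ultra _ _ _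

lemma GP_comm (g h : F) : GP g h = GP h g := by
  have h1 := GP_len g h
  have h2 := GP_len h g
  have h3 : len (h⁻¹ * g) = len (g⁻¹ * h) := by
    rw [← len_inv]; congr 1; group
  omega

lemma len_zero {g : F} (h : len g = 0) : g = 1 := FreeGroup.norm_eq_zero.1 h

lemma GP_split {g h : F} {m : ℕ} (hm : m ≤ GP g h) :
    ∃ p x y, g = p * x ∧ h = p * y ∧ len p = m ∧ len x + m = len g ∧ len y + m = len h := by
  have key : ∀ L M : List (Fin 2 × Bool), ∀ m, m ≤ lcp L M → ∃ P X Y, L = P ++ X ∧ M = P ++ Y ∧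
      P.length = m := by
    intro L
    induction L with
    | nil => intro M m hm; simp [lcp] at hm; subst hm; exact ⟨[], [], M, rfl, rfl, rfl⟩
    | cons x L ih =>
      intro M m hm
      cases m with
      | zero => exact ⟨[], _, M, rfl, rfl, rfl⟩
      | succ m =>
        cases M with
        | nil => simp [lcp] at hm
        | cons y M =>
          unfold lcp at hm
          split_ifs at hm with hxy
          · subst hxy
            obtain ⟨P, X, Y, rfl, rfl, rfl⟩ := ih M m (by omega)
            exact ⟨x :: P, X, Y, rfl, rfl, rfl⟩
          · omega
  obtain ⟨P, X, Y, h1, h2, h3⟩ := key _ _ m hm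
  have r1 : FreeGroup.IsReduced (P ++ X) := h1 ▸ FreeGroup.isReduced_toWord
  have r2 : FreeGroup.IsReduced (P ++ Y) := h2 ▸ FreeGroup.isReduced_toWord
  have l : ∀ L : List (Fin 2 × Bool), FreeGroup.IsReduced L → len (FreeGroup.mk L) = L.length := by
    intro L hL
    rw [len, FreeGroup.toWord_mk, hL.reduce_eq]
  have a1 := List.isChain_append.1 r1
  have a2 := List.isChain_append.1 r2
  refine ⟨FreeGroup.mk P, FreeGroup.mk X, FreeGroup.mk Y, ?_, ?_, ?_, ?_, ?_⟩
  · rw [← mk_append, ← h1, FreeGroup.mk_toWord]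
  · rw [← mk_append, ← h2, FreeGroup.mk_toWord]
  · rw [l _ a1.1, h3]
  · rw [l _ a1.2.1, len, h1, List.length_append, h3]; omega
  · rw [l _ a2.2.1, len, h2, List.length_append, h3]; omega

lemma len_sq {v : F} (hv : v ≠ 1) : len v < len (v * v) := by
  have hr := FreeGroup.isReduced_toWord (x := v)
  have h1 := FreeGroup.reduceCyclically.reduce_flatten_replicate_succ hr 1
  have h2 : (v * v).toWord = FreeGroup.reduce (List.replicate 2 v.toWord).flatten := by
    rw [FreeGroup.toWord_mul]; simp [List.replicate]
  have h3 := FreeGroup.reduceCyclically.conj_conjugator_reduceCyclically v.toWord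
  have h4 : FreeGroup.reduceCyclically v.toWord ≠ [] := by
    intro h
    rw [h] at h3
    apply hv
    rw [← FreeGroup.mk_toWord (x := v), ← h3, List.append_nil, mk_append, ← FreeGroup.inv_mk,
      mul_inv_cancel]
  have h5 := List.length_pos_iff.2 h4
  rw [len, len, h2, h1]
  have h6 := congrArg List.length h3
  simp [List.replicate] at h6 ⊢
  omega


/-- Total length of the images of the generators. -/
def NN (φ : MulAut F) : ℕ := len (φ ga) + len (φ gb)

lemma hh_chi : chi ∈ HH := Subgroup.subset_closure (by simp)
lemma hh_iot : iot ∈ HH := Subgroup.subset_closure (by simp)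
lemma hh_σ : σ ∈ HH := Subgroup.subset_closure (by simp)
lemma hh_conj (g : F) : MulAut.conj g ∈ HH := Subgroup.subset_closure (by simp)

lemma sperm {i j : Fin 2} (hij : i ≠ j) (e d : Bool) :
    ∃ p ∈ HH, p ga = sg i e ∧ p gb = sg j d := by
  obtain ⟨f, hf, h1, h2⟩ : ∃ f ∈ HH, f ga = sg 0 e ∧ f gb = sg 1 d := by
    have c := hh_chi
    have t := hh_iot
    cases e <;> cases d
    · exact ⟨chi * iot * chi * iot, mul_mem (mul_mem (mul_mem c t) c) t,
        by simp [chi_a, chi_b, iot_a, iot_b]; rfl, by simp [chi_a, chi_b, iot_a, iot_b]; rfl⟩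
    · exact ⟨chi * iot * chi, mul_mem (mul_mem c t) c,
        by simp [chi_a, chi_b, iot_a, iot_b]; rfl, by simp [chi_a, chi_b, iot_a, iot_b]; rfl⟩
    · exact ⟨iot, t,
        by simp [chi_a, chi_b, iot_a, iot_b]; rfl, by simp [chi_a, chi_b, iot_a, iot_b]; rfl⟩
    · exact ⟨1, one_mem _, rfl, rfl⟩
  have : (i = 0 ∧ j = 1) ∨ (i = 1 ∧ j = 0) := by omega
  rcases this with ⟨rfl, rfl⟩ | ⟨rfl, rfl⟩
  · exact ⟨f, hf, h1, h2⟩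
  · refine ⟨chi * f, mul_mem hh_chi hf, ?_, ?_⟩
    · rw [MulAut.mul_apply, h1]
      cases e
      · rw [sg_false, sg_false, map_inv]; exact congrArg _ chi_a
      · exact chi_a
    · rw [MulAut.mul_apply, h2]
      cases d
      · rw [sg_false, sg_false, map_inv]; exact congrArg _ chi_b
      · exact chi_b

/-- Nielsen-minimal automorphisms. -/
def Mini (φ : MulAut F) : Prop := ∀ k₁ ∈ HH, ∀ k₂ ∈ HH, NN φ ≤ NN (k₁ * φ * k₂)

/-- Image of a letter. -/
def VV (φ : MulAut F) (x : Fin 2 × Bool) : F := φ (sg x.1 x.2)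

lemma VV_inv (φ : MulAut F) (i e) : (VV φ (i, e))⁻¹ = VV φ (i, !e) := by
  unfold VV
  rw [← map_inv]
  cases e
  · simp [sg_false, sg_true]
  · simp [sg_false, sg_true]

lemma VV_ne (φ : MulAut F) (x) : VV φ x ≠ 1 := by
  unfold VV
  rw [Ne, map_eq_one_iff φ φ.injective]
  obtain ⟨i, e⟩ := x
  cases e
  · simpa [sg_false] using FreeGroup.of_ne_one i
  · simpa [sg_true] using FreeGroup.of_ne_one i

lemma VV_pos (φ : MulAut F) (x) : 0 < len (VV φ x) := by
  rcases Nat.eq_zero_or_pos (len (VV φ x)) with h | h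
  · exact absurd (len_zero h) (VV_ne φ x)
  · exact h

lemma NN_eq (φ : MulAut F) {i j : Fin 2} (hij : i ≠ j) (e d : Bool) :
    NN φ = len (VV φ (i, e)) + len (VV φ (j, d)) := by
  have key : ∀ i e, len (VV φ (i, e)) = len (VV φ (i, true)) := by
    intro i e
    cases e
    · rw [← len_inv, VV_inv]; rfl
    · rfl
  rw [key i e, key j d]
  have : (i = 0 ∧ j = 1) ∨ (i = 1 ∧ j = 0) := by omega
  rcases this with ⟨rfl, rfl⟩ | ⟨rfl, rfl⟩
  · rfl
  · rw [add_comm]; rfl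

lemma Mini.move {φ : MulAut F} (h : Mini φ) {i j : Fin 2} (hij : i ≠ j) (e d : Bool) (q : F) :
    len (VV φ (i, e)) + len (VV φ (j, d)) ≤
      len (q⁻¹ * (VV φ (i, e) * VV φ (j, d)) * q) + len (q⁻¹ * VV φ (j, d) * q) := by
  obtain ⟨p, hp, h1, h2⟩ := sperm hij e d
  have := h (MulAut.conj q⁻¹) (hh_conj _) (p * σ) (mul_mem hp hh_σ)
  rw [NN_eq φ hij e d] at this
  refine this.trans (le_of_eq ?_)
  unfold NN VV
  simp [σ_a, σ_b, h1, h2]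

lemma Mini.N1 {φ : MulAut F} (h : Mini φ) {i j : Fin 2} (hij : i ≠ j) (e d : Bool) :
    len (VV φ (i, e)) ≤ len (VV φ (i, e) * VV φ (j, d)) := by
  have := h.move hij e d 1
  simp at this
  exact this

lemma Mini.N1' {φ : MulAut F} (h : Mini φ) {i j : Fin 2} (hij : i ≠ j) (e d : Bool) :
    len (VV φ (j, d)) ≤ len (VV φ (i, e) * VV φ (j, d)) := by
  have := h.N1 hij.symm (!d) (!e)
  rw [← VV_inv, ← VV_inv, len_inv, ← mul_inv_rev, len_inv] at this
  exact this

/-- Cancellation between images of letters. -/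
def cc (φ : MulAut F) (x y : Fin 2 × Bool) : ℕ := GP (VV φ x)⁻¹ (VV φ y)

lemma cc_len (φ : MulAut F) (x y) :
    len (VV φ x * VV φ y) + 2 * cc φ x y = len (VV φ x) + len (VV φ y) := by
  have := GP_len (VV φ x)⁻¹ (VV φ y)
  rwa [inv_inv, len_inv] at this

/-- Non-cancelling pairs of letters. -/
def NC (x y : Fin 2 × Bool) : Prop := x.1 = y.1 → x.2 = y.2

lemma cc_same (φ : MulAut F) (x) : 2 * cc φ x x < len (VV φ x) := by
  have h1 := cc_len φ x x
  have h2 := len_sq (VV_ne φ x)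
  omega

lemma Mini.cc_le {φ : MulAut F} (h : Mini φ) {x y} (hxy : NC x y) :
    2 * cc φ x y ≤ len (VV φ x) ∧ 2 * cc φ x y ≤ len (VV φ y) := by
  by_cases h1 : x.1 = y.1
  · have : x = y := Prod.ext h1 (hxy h1)
    subst this
    have := cc_same φ x
    omega
  · have h2 := h.N1 h1 x.2 y.2
    have h3 := h.N1' h1 x.2 y.2
    have h4 := cc_len φ x y
    change len (VV φ x) ≤ len (VV φ x * VV φ y) at h2
    change len (VV φ y) ≤ len (VV φ x * VV φ y) at h3
    omega

lemma Mini.N2 {φ : MulAut F} (h : Mini φ) {x y z} (hxy : NC x y) (hyz : NC y z) :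
    cc φ x y + cc φ y z < len (VV φ y) := by
  by_contra hlt
  obtain ⟨a1, a2⟩ := h.cc_le hxy
  obtain ⟨a3, a4⟩ := h.cc_le hyz
  have e1 : 2 * cc φ x y = len (VV φ y) := by omega
  have e2 : 2 * cc φ y z = len (VV φ y) := by omega
  have hv := VV_pos φ y
  have n1 : x.1 ≠ y.1 := by
    intro hh
    have : x = y := Prod.ext hh (hxy hh)
    subst this
    have := cc_same φ x
    omega
  have n2 : y.1 ≠ z.1 := by
    intro hh
    have : y = z := Prod.ext hh (hyz hh)
    subst this
    have := cc_same φ y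
    omega
  have n3 : x.1 = z.1 := by omega
  by_cases hs : x.2 = z.2
  · have : x = z := Prod.ext n3 hs
    subst this
    have hmv := fun q => h.move n1 x.2 y.2 q
    change ∀ q, len (VV φ x) + len (VV φ y) ≤
      len (q⁻¹ * (VV φ x * VV φ y) * q) + len (q⁻¹ * VV φ y * q) at hmv
    unfold cc at e1 e2 a1 a2 a3 a4
    generalize VV φ x = u at *
    generalize VV φ y = v at *
    obtain ⟨p, s, t, b1, b2, b3, b4, b5⟩ := GP_split (le_refl (GP u⁻¹ v))
    obtain ⟨q, t', r, d1, d2, d3, d4, d5⟩ := GP_split (le_refl (GP v⁻¹ u))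
    rw [len_inv] at b4 d4
    have hu : u = s⁻¹ * p⁻¹ := by rw [← mul_inv_rev, ← b1, inv_inv]
    have hv' : v⁻¹ = t⁻¹ * p⁻¹ := by rw [b2, mul_inv_rev]
    have g1 := GP_len q u
    rw [show q⁻¹ * u = r by rw [d2]; group] at g1
    have g2 := GP_len u s⁻¹
    rw [show u⁻¹ * s⁻¹ = p by rw [b1]; group, len_inv] at g2
    have g3 := GP_ultra q u s⁻¹
    have g4 := GP_len q s⁻¹
    rw [len_inv] at g4
    have g5 := GP_len q v⁻¹
    rw [show q⁻¹ * v⁻¹ = t' by rw [d1]; group, len_inv] at g5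
    have g6 := GP_len v⁻¹ t⁻¹
    rw [show (v⁻¹)⁻¹ * t⁻¹ = p by rw [inv_inv, b2]; group, len_inv, len_inv] at g6
    have g7 := GP_ultra q v⁻¹ t⁻¹
    have g8 := GP_len q t⁻¹
    rw [len_inv] at g8
    have hqt : q = t⁻¹ := by
      have : q⁻¹ * t⁻¹ = 1 := len_zero (by omega)
      exact (inv_mul_eq_one.1 this)
    have hm := hmv q
    have k1 : q⁻¹ * (u * v) * q = q⁻¹ * s⁻¹ := by
      rw [hu, b2, hqt]; group
    have k2 : q⁻¹ * v * q = q⁻¹ * p := by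
      rw [b2, hqt]; group
    have k3 := GP_len q p
    rw [k1, k2] at hm
    omega
  · have hz : (VV φ x)⁻¹ = VV φ z := by
      obtain ⟨i, e⟩ := x
      obtain ⟨k, f⟩ := z
      simp only at n3 hs
      subst n3
      rw [VV_inv]
      congr
      revert hs; cases e <;> cases f <;> simp
    unfold cc at e1 e2
    rw [hz] at e1
    have g1 := GP_ultra (VV φ y)⁻¹ (VV φ z) (VV φ y)
    have g2 := cc_same φ y
    unfold cc at g2
    omega

lemma Mini.word {φ : MulAut F} (h : Mini φ) (L : List (Fin 2 × Bool)) : ∀ y,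
    FreeGroup.IsReduced (L ++ [y]) → ∀ x, NC y x →
      GP (φ (FreeGroup.mk (L ++ [y])))⁻¹ (VV φ x) = cc φ y x ∧
      L.length + 1 + cc φ y x ≤ len (φ (FreeGroup.mk (L ++ [y]))) := by
  induction L using List.reverseRecOn with
  | nil =>
    intro y _ x hyx
    refine ⟨rfl, ?_⟩
    have h1 := h.cc_le hyx
    have h2 := VV_pos φ y
    change _ ≤ len (VV φ y)
    simp only [List.length_nil]
    omega
  | append_singleton L w ih =>
    intro y hy x hyx
    have hr := List.isChain_append.1 hy
    have hwy : NC w y := hr.2.2 w (by simp) y (by simp)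
    obtain ⟨h1, h2⟩ := ih w hr.1 y hwy
    have hN := h.N2 hwy hyx
    rw [mk_append, map_mul]
    change GP (_ * VV φ y)⁻¹ (VV φ x) = _ ∧ _ ≤ len (_ * VV φ y)
    generalize φ (FreeGroup.mk (L ++ [w])) = W at *
    have g1 := GP_len W⁻¹ (VV φ y)
    rw [inv_inv, len_inv] at g1
    have g2 := GP_len (W * VV φ y)⁻¹ (VV φ y)⁻¹
    rw [inv_inv, mul_inv_cancel_right, len_inv, len_inv] at g2
    have g3 := GP_ultra (W * VV φ y)⁻¹ (VV φ y)⁻¹ (VV φ x)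
    have g4 := GP_ultra (VV φ y)⁻¹ (W * VV φ y)⁻¹ (VV φ x)
    rw [GP_comm (VV φ y)⁻¹ (W * VV φ y)⁻¹] at g4
    have g5 : cc φ y x = GP (VV φ y)⁻¹ (VV φ x) := rfl
    have g6 := (h.cc_le hyx).2
    simp only [List.length_append, List.length_singleton]
    omega

lemma Mini.gen {φ : MulAut F} (h : Mini φ) (i : Fin 2) :
    ∃ x : Fin 2 × Bool, φ⁻¹ (FreeGroup.of i) = sg x.1 x.2 := by
  have hr := FreeGroup.isReduced_toWord (x := φ⁻¹ (FreeGroup.of i))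
  have hm : FreeGroup.mk (φ⁻¹ (FreeGroup.of i)).toWord = φ⁻¹ (FreeGroup.of i) :=
    FreeGroup.mk_toWord
  generalize (φ⁻¹ (FreeGroup.of i)).toWord = M at *
  rw [← hm]
  have hl : len (φ (FreeGroup.mk M)) = 1 := by
    rw [hm, MulAut.apply_inv_self]; simp [len]
  rcases List.eq_nil_or_concat M with rfl | ⟨L, y, rfl⟩
  · rw [show FreeGroup.mk ([] : List (Fin 2 × Bool)) = 1 from rfl] at hl
    simp [len] at hl
  · rw [List.concat_eq_append] at *
    obtain ⟨_, h2⟩ := h.word L y hr y (fun _ => rfl)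
    have : L = [] := List.length_eq_zero_iff.1 (by omega)
    subst this
    exact ⟨y, rfl⟩

lemma Mini.mem {φ : MulAut F} (h : Mini φ) : φ ∈ HH := by
  obtain ⟨⟨i, e⟩, hx⟩ := h.gen 0
  obtain ⟨⟨j, d⟩, hy⟩ := h.gen 1
  have hij : i ≠ j := by
    rintro rfl
    simp only at hx hy
    by_cases hed : e = d
    · subst hed
      have := φ⁻¹.injective (hx.trans hy.symm)
      exact absurd (FreeGroup.of_injective this) (by decide)
    · have h1 : sg i e = (sg i d)⁻¹ := by
        revert hed
        cases e <;> cases d <;> simp [sg_false, sg_true]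
      rw [h1, ← hy, ← map_inv] at hx
      have := φ⁻¹.injective hx
      have := congrArg FreeGroup.toWord this
      simp [FreeGroup.toWord_inv, FreeGroup.invRev] at this
  obtain ⟨p, hp, h1, h2⟩ := sperm hij e d
  have : φ⁻¹ = p := aut_ext (hx.trans h1.symm) (hy.trans h2.symm)
  rw [← inv_mem_iff, this]
  exact hp

lemma nielsen : ∀ φ : MulAut F, φ ∈ HH := by
  have key : ∀ n, ∀ φ : MulAut F, NN φ = n → φ ∈ HH := by
    intro n
    induction n using Nat.strong_induction_on with
    | _ n ih =>
      intro φ hn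
      by_contra hc
      apply hc
      apply Mini.mem
      intro k₁ h1 k₂ h2
      by_contra hlt
      apply hc
      have := ih _ (by omega) (k₁ * φ * k₂) rfl
      rwa [Subgroup.mul_mem_cancel_right _ h2, Subgroup.mul_mem_cancel_left _ h1] at this
  exact fun φ => key _ φ rfl

/-- If some conjugate of `φ(u)` is positive for some automorphism `φ`, then this already
happens for `β ∘ ψ` with `β` of type (W1) and `ψ` a chain of type (C1) or (C2) of length
at most `2‖u‖+3`. -/
theorem stmt1 (u : F)
    (h : ∃ φ : MulAut F, ∃ g : F, IsPositive (g * φ u * g⁻¹)) :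
    ∃ c : List (ℕ × ℕ), c ≠ [] ∧ chainLen c ≤ 2 * cyclen u + 3 ∧
      ∃ ψ : MulAut F, (ψ = chainC1 c ∨ ψ = chainC2 c) ∧
        ∃ β : MulAut F, IsW1 β ∧ ∃ g : F, IsPositive (g * β (ψ u) * g⁻¹) := by
  exact assembly nielsen u h
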